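/- arXiv:math/0612415 — 2 statements merged into one kernel-verified Lean document; each statement's English description precedes it below -/
import Mathlib

section
/- Let k ∈ ℤ with k ≠ 0, and let f = x² + kx − 1 ∈ ℤ[x]. If k ≠ −1, then f is stable, i.e. f^n is irreducible over ℚ for all n ≥ 1. If k = −1, then f³ = g₁·g₂ where g₁ = x⁴ − 3x³ + 4x − 1 and g₂ = x⁴ − x³ − 3x² + x + 1, and both g₁ and g₂ are f-stable: g₁ ∘ f^n and g₂ ∘ f^n are irreducible over ℚ for every n ≥ 0. -/
open Polynomial

/-- The `n`-th iterate of a polynomial, with `f^0 = X`. -/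
noncomputable def polyIter (f : Polynomial ℤ) : ℕ → Polynomial ℤ
  | 0 => X
  | n + 1 => f.comp (polyIter f n)


/-- Capelli-type criterion. -/
theorem capelli_step {K : Type*} [Field K] [CharZero K] (k : K) (g : K[X]) (hg : g.Monic) (hi : Irreducible g)
    (he : Even g.natDegree) (hs : ¬ IsSquare (g.eval (-(k^2+4)/4))) :
    Irreducible (g.comp (X ^ 2 + C k * X - 1)) := by
  have hfe : (X ^ 2 + C k * X - 1 : K[X]) = X^2 + (C k * X + C (-1)) := by
    simp; ring
  have hfm : (X ^ 2 + C k * X - 1 : K[X]).Monic := by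
    rw [hfe]
    exact monic_X_pow_add (lt_of_le_of_lt degree_linear_le (by norm_num))
  refine Polynomial.irreducible_comp hg hfm hi ?_
  intro E _ _ x hx
  have hxi : IsIntegral K x := by
    by_contra h
    rw [minpoly.eq_zero h] at hx
    exact hi.ne_zero hx.symm
  set L := IntermediateField.adjoin K {x}
  set b := IntermediateField.AdjoinSimple.gen K x with hb
  have hP : (map (algebraMap K L) (X ^ 2 + C k * X - 1) - C b : L[X])
      = X^2 + (C (algebraMap K L k) * X + C (-1 - b)) := by
    simp [Polynomial.map_sub]; ring
  have hPm : (map (algebraMap K L) (X ^ 2 + C k * X - 1) - C b : L[X]).Monic := by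
    rw [hP]
    exact monic_X_pow_add (lt_of_le_of_lt degree_linear_le (by norm_num))
  have hPd : (map (algebraMap K L) (X ^ 2 + C k * X - 1) - C b : L[X]).natDegree = 2 := by
    rw [hP]
    compute_degree!
  rw [hPm.irreducible_iff_roots_eq_zero_of_degree_le_three (by rw [hPd]) (by rw [hPd]; norm_num)]
  rw [Multiset.eq_zero_iff_forall_notMem]
  intro y hy
  have hy' := (mem_roots'.1 hy).2
  rw [hP] at hy'
  simp only [IsRoot, eval_add, eval_pow, eval_X, eval_mul, eval_C] at hy'
  apply hs
  set m : K := -(k^2+4)/4 with hm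
  have : CharZero L := charZero_of_injective_algebraMap (algebraMap K L).injective
  have hsq : b - algebraMap K L m = (y + algebraMap K L (k/2))^2 := by
    have : algebraMap K L m = -((algebraMap K L k)^2/4 + 1) := by
      rw [hm]; simp only [map_div₀, map_neg, map_add, map_pow, map_ofNat]; field_simp
    rw [this]
    simp only [map_div₀, map_ofNat]
    field_simp
    linear_combination -16 * hy'
  have hbint : IsIntegral K b := (IntermediateField.AdjoinSimple.isIntegral_gen K x).2 hxi
  set z := b - algebraMap K L m with hz
  have hzint : IsIntegral K z := hbint.sub isIntegral_algebraMap
  have htop : Algebra.adjoin K {z} = ⊤ := by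
    have h1 := (IntermediateField.adjoin.powerBasis hxi).adjoin_gen_eq_top
    rw [IntermediateField.adjoin.powerBasis_gen] at h1
    rw [eq_top_iff, ← h1]
    apply Algebra.adjoin_le
    intro t ht
    rw [Set.mem_singleton_iff] at ht
    have : t = z + algebraMap K L m := by rw [ht, hz]; ring
    rw [this]
    exact add_mem (Algebra.subset_adjoin rfl) (Subalgebra.algebraMap_mem _ _)
  have hmin : minpoly K z = g.comp (X + C m) := by
    rw [hz, minpoly.sub_algebraMap, hb, IntermediateField.minpoly_gen, hx]
  have hn := Algebra.PowerBasis.norm_gen_eq_coeff_zero_minpoly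
    (PowerBasis.ofAdjoinEqTop hzint htop)
  rw [← PowerBasis.natDegree_minpoly, PowerBasis.ofAdjoinEqTop_gen, hmin, natDegree_comp,
    natDegree_X_add_C, mul_one, he.neg_one_pow, one_mul, coeff_zero_eq_eval_zero, eval_comp] at hn
  simp only [eval_add, eval_X, eval_C, zero_add] at hn
  rw [← hn, hsq, map_pow]
  exact ⟨_, pow_two _⟩

theorem quartic_coeffs {F : Type*} [Field F] (P : F[X]) (a b c d : F)
    (hP : P = X^4 + C a * X^3 + C b * X^2 + C c * X + C d) :
    P.coeff 0 = d ∧ P.coeff 1 = c ∧ P.coeff 2 = b ∧ P.coeff 3 = a := by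
  refine ⟨?_, ?_, ?_, ?_⟩ <;> rw [hP] <;> simp [coeff_X, coeff_C, coeff_X_pow]

theorem quartic_irred {F : Type*} [Field F] (P : F[X]) (a b c d : F)
    (hP : P = X^4 + C a * X^3 + C b * X^2 + C c * X + C d)
    (h1 : ∀ r : F, r^4 + a * r^3 + b*r^2 + c * r + d ≠ 0)
    (h2 : ∀ p q r s : F, p + r = a → q + s + p * r = b → p * s + q * r = c → q * s = d → False) :
    Irreducible P := by
  have hd : P.natDegree = 4 := by rw [hP]; compute_degree!
  have hm : P.Monic := by rw [hP]; monicity!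
  obtain ⟨c0, c1, c2, c3⟩ := quartic_coeffs P a b c d hP
  rw [hm.irreducible_iff_natDegree']
  refine ⟨fun h => by rw [h] at hd; simp at hd, ?_⟩
  intro u v hu hv huv hmem
  rw [hd, Finset.mem_Ioc] at hmem
  have hud : u.natDegree + v.natDegree = 4 := by rw [← hu.natDegree_mul hv, huv, hd]
  have hv12 : v.natDegree = 1 ∨ v.natDegree = 2 := by omega
  rcases hv12 with h | h
  · have hvX : v = X + C (v.coeff 0) := by
      have := hv.as_sum
      rw [h] at this
      simpa using this
    have : P.eval (-(v.coeff 0)) = 0 := by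
      rw [← huv, eval_mul, hvX]; simp
    rw [hP] at this
    simp only [eval_add, eval_mul, eval_pow, eval_X, eval_C] at this
    exact h1 _ this
  · have hu2 : u.natDegree = 2 := by omega
    have hvX : v = X^2 + C (v.coeff 1) * X + C (v.coeff 0) := by
      have := hv.as_sum
      rw [h] at this
      rw [Finset.sum_range_succ, Finset.sum_range_one] at this
      linear_combination this
    have huX : u = X^2 + C (u.coeff 1) * X + C (u.coeff 0) := by
      have := hu.as_sum
      rw [hu2] at this
      rw [Finset.sum_range_succ, Finset.sum_range_one] at this
      linear_combination this
    generalize v.coeff 1 = r at *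
    generalize v.coeff 0 = s at *
    generalize u.coeff 1 = p at *
    generalize u.coeff 0 = q at *
    have hexp : P = X^4 + C (p + r) * X^3 + C (q + s + p * r) * X^2 + C (p*s+q*r) * X + C (q*s) := by
      rw [← huv, huX, hvX]
      simp only [C_add, C_mul]; ring
    obtain ⟨d0, d1, d2, d3⟩ := quartic_coeffs P _ _ _ _ hexp
    exact h2 p q r s (d3.symm.trans c3) (d2.symm.trans c2) (d1.symm.trans c1) (d0.symm.trans c0)

theorem irred_g1 : Irreducible (X ^ 4 - 3 * X ^ 3 + 4 * X - 1 : ℚ[X]) := by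
  have hz : Irreducible (X ^ 4 - 3 * X ^ 3 + 4 * X - 1 : ℤ[X]) := by
    refine Monic.irreducible_of_irreducible_map (Int.castRingHom (ZMod 2)) _ (by monicity!) ?_
    refine quartic_irred _ (-3) 0 4 (-1) ?_ (by decide) (by decide)
    have e3 : (C (3:ZMod 2) : (ZMod 2)[X]) = 3 := rfl
    have e4 : (C (4:ZMod 2) : (ZMod 2)[X]) = 4 := rfl
    simp only [Polynomial.map_sub, Polynomial.map_add, Polynomial.map_mul, Polynomial.map_pow,
      map_X, Polynomial.map_ofNat, Polynomial.map_one, C_neg, e3, e4, C_0, C_1]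
    ring
  have := (Monic.irreducible_iff_irreducible_map_fraction_map (K := ℚ) (by monicity!)).1 hz
  simpa [Polynomial.map_sub] using this

theorem irred_g2 : Irreducible (X ^ 4 - X ^ 3 - 3 * X ^ 2 + X + 1 : ℚ[X]) := by
  have hz : Irreducible (X ^ 4 - X ^ 3 - 3 * X ^ 2 + X + 1 : ℤ[X]) := by
    refine Monic.irreducible_of_irreducible_map (Int.castRingHom (ZMod 2)) _ (by monicity!) ?_
    refine quartic_irred _ (-1) (-3) 1 1 ?_ (by decide) (by decide)
    have e3 : (C (3:ZMod 2) : (ZMod 2)[X]) = 3 := rfl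
    have e4 : (C (4:ZMod 2) : (ZMod 2)[X]) = 4 := rfl
    simp only [Polynomial.map_sub, Polynomial.map_add, Polynomial.map_mul, Polynomial.map_pow,
      map_X, Polynomial.map_ofNat, Polynomial.map_one, C_neg, e3, e4, C_0, C_1]
    ring
  have := (Monic.irreducible_iff_irreducible_map_fraction_map (K := ℚ) (by monicity!)).1 hz
  simpa [Polynomial.map_sub] using this

theorem irred_four : Irreducible ((X ^ 2 + C (4:ℚ) * X - 1).comp (X ^ 2 + C (4:ℚ) * X - 1)) := by
  refine quartic_irred _ 8 18 8 (-4) ?_ ?_ ?_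
  · simp only [sub_comp, add_comp, mul_comp, pow_comp, X_comp, C_comp, one_comp]
    have e4 : (C (4:ℚ) : ℚ[X]) = 4 := rfl
    have e8 : (C (8:ℚ) : ℚ[X]) = 8 := rfl
    have e18 : (C (18:ℚ) : ℚ[X]) = 18 := rfl
    rw [C_neg, e4, e8, e18]
    ring
  · intro r h
    have : ¬ IsSquare (5:ℚ) := by norm_num
    exact this ⟨(r+2)^2-3, by linear_combination -h⟩
  · intro p q r s e1 e2 e3 e4
    have n20 : ¬ IsSquare (20:ℚ) := by norm_num
    have n2 : ¬ IsSquare (2:ℚ) := by norm_num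
    have n10 : ¬ IsSquare (10:ℚ) := by norm_num
    obtain rfl : r = 8 - p := by linarith
    have key : (p-4) * (4*(p-4) + s - q) = 0 := by linear_combination e3 - 4 * e2
    rcases mul_eq_zero.1 key with h | h
    · obtain rfl : p = 4 := by linarith
      obtain rfl : s = 2 - q := by linarith
      exact n20 ⟨2 * q - 2, by linear_combination 4*e4⟩
    · obtain rfl : s = q - 4*(p-4) := by linarith
      have hq : q = (2 + (p-4)^2 + 4*(p-4))/2 := by linarith
      rw [hq] at e4
      have : ((p-4)^2 - 2) * ((p-4)^2-10) = 0 := by linear_combination 4 * e4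
      rcases mul_eq_zero.1 this with h | h
      · exact n2 ⟨p-4, by linear_combination -h⟩
      · exact n10 ⟨p-4, by linear_combination -h⟩

/-- The critical orbit of `x² + kx - 1`, starting at the critical value. -/
def critOrb (k : ℤ) : ℕ → ℚ
  | 0 => -((k:ℚ)^2+4)/4
  | n + 1 => (critOrb k n)^2 + k * critOrb k n - 1

/-- Denominators (divided by four). -/
def denM : ℕ → ℤ
  | 0 => 1
  | n + 1 => 4 * (denM n)^2

/-- Numerators of the shifted critical orbit. -/
def numB (k : ℤ) : ℕ → ℤ
  | 0 => -(k^2 - 2*k + 4)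
  | n + 1 => (numB k n)^2 - 4 * (k^2 - 2*k + 4) * (denM n)^2

theorem denM_pos (n : ℕ) : 0 < denM n := by
  induction n with
  | zero => simp [denM]
  | succ n ih => simp only [denM]; positivity

theorem critOrb_eq (k : ℤ) (n : ℕ) :
    critOrb k n = (numB k n : ℚ) / (4 * denM n) - k / 2 := by
  induction n with
  | zero => simp only [critOrb, numB, denM]; push_cast; ring
  | succ n ih =>
    have : (denM n : ℚ) ≠ 0 := by exact_mod_cast (denM_pos n).ne'
    simp only [critOrb, ih, numB, denM]; push_cast; field_simp; ring

theorem isSquare_int_of (q : ℚ) (N : ℤ) (h : q * q = N) : IsSquare N := by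
  rw [← Rat.isSquare_intCast_iff]
  exact ⟨q, h.symm⟩

theorem critOrb_sq (k : ℤ) (n : ℕ) (h : IsSquare (critOrb k (n+1))) :
    IsSquare ((numB k n)^2 - 4 * (k^2+4) * (denM n)^2) := by
  obtain ⟨y, hy⟩ := h
  refine isSquare_int_of (y * (4 * denM n)) _ ?_
  have : (denM n : ℚ) ≠ 0 := by exact_mod_cast (denM_pos n).ne'
  have e : y * (4 * denM n) * (y * (4 * denM n)) = (y * y) * (4 * denM n)^2 := by ring
  rw [e, ← hy, critOrb, critOrb_eq]
  push_cast; field_simp; ring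

theorem sq_bound (B Q M : ℤ) (hQ : 0 < Q) (hM : 0 < M) (h : IsSquare (B^2 - 4 * Q * M^2)) :
    B ≤ 1 + Q * M^2 := by
  obtain ⟨Y, hY⟩ := h
  have hp : Even (B - Y) := by
    have h1 : Even (B^2 - Y^2) := ⟨2 * Q * M^2, by linear_combination hY⟩
    have h2 : B^2 - Y^2 = (B - Y) * (B + Y) := by ring
    rw [h2, Int.even_mul] at h1
    rcases h1 with h1 | h1
    · exact h1
    · rw [Int.even_add] at h1; rw [Int.even_sub]; exact h1
  obtain ⟨u, hu⟩ := hp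
  obtain ⟨v, hv⟩ : ∃ v, B = u + v := ⟨B - u, by ring⟩
  have hY' : Y = v - u := by linarith
  subst hv hY'
  have huv : u * v = Q * M^2 := by
    have : 4 * (u * v) = 4 * (Q * M^2) := by linear_combination hY
    linarith
  have hpos : 0 < Q * M^2 := by positivity
  rw [← huv] at hpos ⊢
  rcases pos_and_pos_or_neg_and_neg_of_mul_pos hpos with ⟨a, b⟩ | ⟨a, b⟩
  · nlinarith
  · linarith

theorem growth (k c : ℤ) (n₀ : ℕ) (hc : 17 ≤ c) (hck : k^2 + 5 ≤ c) (hM : 4 ≤ denM n₀)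
    (hB : c * (denM n₀)^2 ≤ numB k n₀) (n : ℕ) (hn : n₀ ≤ n) :
    4 ≤ denM n ∧ c * (denM n)^2 ≤ numB k n := by
  induction n, hn using Nat.le_induction with
  | base => exact ⟨hM, hB⟩
  | succ n _ ih =>
    obtain ⟨h1, h2⟩ := ih
    simp only [denM, numB]
    refine ⟨by nlinarith, ?_⟩
    generalize denM n = M at *
    generalize numB k n = B at *
    have h0 : 0 ≤ c * M^2 := by positivity
    have h3 : (c * M^2)^2 ≤ B^2 := pow_le_pow_left₀ h0 h2 2
    have hM2 : 16 ≤ M^2 := by nlinarith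
    have h4 : k^2 - 2*k + 4 ≤ 4 * c := by nlinarith [sq_nonneg (k+1)]
    have h5 : 4 * (k^2 - 2*k+4) * M^2 ≤ 16 * c * M^2 := by nlinarith
    have h6 : 16 * c * M^2 ≤ c * M^2 * M^2 := by nlinarith
    have h7 : c * M^2 * M^2 ≤ c * (c - 16) * (M^2 * M^2) := by
      have : 0 ≤ c * (M^2 * M^2) := by positivity
      nlinarith
    nlinarith

theorem nonsq_growth (k c : ℤ) (n₀ : ℕ) (hc : 17 ≤ c) (hck : k^2 + 5 ≤ c) (hM : 4 ≤ denM n₀)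
    (hB : c * (denM n₀)^2 ≤ numB k n₀) (n : ℕ) (hn : n₀ ≤ n) :
    ¬ IsSquare (critOrb k (n+1)) := by
  intro h
  obtain ⟨h1, h2⟩ := growth k c n₀ hc hck hM hB n hn
  have h3 := sq_bound _ _ _ (by positivity) (denM_pos n) (critOrb_sq k n h)
  nlinarith

theorem not_sq_between (s v : ℤ) (hs : 0 ≤ s) (h1 : s^2 < v) (h2 : v < (s+1)^2) : ¬ IsSquare v := by
  rintro ⟨y, rfl⟩
  have a : s < |y| := by
    apply lt_of_pow_lt_pow_left₀ 2 (abs_nonneg y); rw [sq_abs]; linarith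
  have b : |y| < s + 1 := by
    apply lt_of_pow_lt_pow_left₀ 2 (by linarith); rw [sq_abs]; linarith
  omega

theorem nonsq_one (k : ℤ) (hk : k ≤ -1 ∨ 5 ≤ k) : ¬ IsSquare (critOrb k 1) := by
  intro h
  have h := critOrb_sq k 0 h
  simp only [numB, denM] at h
  revert h
  rcases hk with hk | hk
  · apply not_sq_between (k^2-2*k+2) <;> nlinarith
  · by_cases h7 : 7 ≤ k
    · apply not_sq_between (k^2-2*k+1) <;> nlinarith
    · obtain rfl | rfl : k = 5 ∨ k = 6 := by omega
      · norm_num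
      · norm_num

theorem nonsq_generic (k : ℤ) (hk : k ≤ -3 ∨ 6 ≤ k) (n : ℕ) : ¬ IsSquare (critOrb k (n+1)) := by
  rcases n with _ | n
  · exact nonsq_one k (by omega)
  · by_cases h3 : k = -3
    · subst h3
      refine nonsq_growth (-3) 17 1 (by norm_num) (by norm_num) ?_ ?_ (n+1) (by omega) <;>
        norm_num [denM, numB]
    · refine nonsq_growth k (k^2+5) 1 ?_ le_rfl ?_ ?_ (n+1) (by omega)
      · rcases hk with hk | hk
        · have : k ≤ -4 := by omega
          nlinarith
        · nlinarith
      · norm_num [denM]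
      · simp only [denM, numB]
        have e : (-(k^2-2*k+4))^2 - 4 * (k^2-2*k+4)*1^2 = (k^2-2*k+4)*(k^2-2*k) := by ring
        rw [e]
        rcases hk with hk | hk
        · have : k ≤ -4 := by omega
          have h1 : 24 ≤ k^2-2*k := by nlinarith
          have : k^2 + 5 ≤ k^2-2*k+4 := by linarith
          nlinarith
        · have h1 : 24 ≤ k^2-2*k := by nlinarith
          have h2 : 0 ≤ k^2-2*k+4 := by linarith
          nlinarith

theorem nonsq_five (n : ℕ) : ¬ IsSquare (critOrb 5 (n+1)) := by
  match n with
  | 0 => exact nonsq_one 5 (by omega)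
  | 1 => norm_num [critOrb]
  | 2 => norm_num [critOrb]
  | 3 => norm_num [critOrb]
  | n + 4 =>
    refine nonsq_growth 5 30 4 (by norm_num) (by norm_num) ?_ ?_ (n+4) (by omega) <;>
        norm_num [denM, numB]

theorem nonsq_neg (k : ℤ) (hk : k = 1 ∨ k = 2 ∨ k = 3) (n : ℕ) : ¬ IsSquare (critOrb k n) := by
  suffices h : critOrb k n < 0 by
    rintro ⟨y, hy⟩
    nlinarith
  rcases hk with rfl | rfl | rfl
  · suffices h : -5/4 ≤ critOrb 1 n ∧ critOrb 1 n < 0 from h.2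
    induction n with
    | zero => norm_num [critOrb]
    | succ n ih =>
      simp only [critOrb]; push_cast
      constructor <;> nlinarith [sq_nonneg (critOrb 1 n + 1/2)]
  · suffices h : -2 ≤ critOrb 2 n ∧ critOrb 2 n < 0 from h.2
    induction n with
    | zero => norm_num [critOrb]
    | succ n ih =>
      simp only [critOrb]; push_cast
      constructor <;> nlinarith [sq_nonneg (critOrb 2 n + 1)]
  · suffices h : -13/4 ≤ critOrb 3 n ∧ critOrb 3 n ≤ -18/100 by linarith
    induction n with
    | zero => norm_num [critOrb]
    | succ n ih =>
      simp only [critOrb]; push_cast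
      constructor <;> nlinarith [sq_nonneg (critOrb 3 n + 3/2)]

theorem nonsq_neg_two (n : ℕ) : ¬ IsSquare (critOrb (-2) (n+1)) := by
  have h : ∀ n, ∃ a : ℤ, critOrb (-2) n = a := by
    intro n
    induction n with
    | zero => exact ⟨-2, by norm_num [critOrb]⟩
    | succ n ih =>
      obtain ⟨a, ha⟩ := ih
      exact ⟨a^2 - 2*a - 1, by simp only [critOrb, ha]; push_cast; ring⟩
  intro hs
  obtain ⟨a, ha⟩ := h n
  obtain ⟨y, hy⟩ := hs
  have h1 : IsSquare ((a-1)^2-2) := by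
    refine isSquare_int_of y _ ?_
    rw [← hy, critOrb, ha]; push_cast; ring
  obtain ⟨z, hz⟩ := h1
  have hz4 := congrArg (Int.cast : ℤ → ZMod 4) hz
  push_cast at hz4
  generalize (a : ZMod 4) = a' at hz4
  generalize (z : ZMod 4) = z' at hz4
  revert a' z'
  decide

theorem nonsq_four (n : ℕ) : ¬ IsSquare (critOrb 4 (n+2)) := by
  have h : ∀ n, ∃ a : ℤ, critOrb 4 (n+1) = a ∧ 4 ≤ a := by
    intro n
    induction n with
    | zero => exact ⟨4, by norm_num [critOrb], le_rfl⟩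
    | succ n ih =>
      obtain ⟨a, ha, h4⟩ := ih
      refine ⟨a^2 + 4*a - 1, ?_, by nlinarith⟩
      rw [critOrb, ha]; push_cast; ring
  intro hs
  obtain ⟨a, ha, h4⟩ := h n
  obtain ⟨y, hy⟩ := hs
  have h1 : IsSquare ((a+2)^2-5) := by
    refine isSquare_int_of y _ ?_
    rw [← hy, critOrb, ha]; push_cast; ring
  revert h1
  apply not_sq_between (a+1) <;> nlinarith

/-- Orbit modulo `p`. -/
def modOrb (p : ℕ) (r₀ : ZMod p) : ℕ → ZMod p
  | 0 => r₀
  | n + 1 => (modOrb p r₀ n)^2 - modOrb p r₀ n - 1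

theorem critOrb_mod (p : ℕ) (r₀ : ZMod p) (h0 : r₀ * 4 = -5) (n : ℕ) :
    ∃ a : ℤ, critOrb (-1) n = (a : ℚ) / 4^(2^n) ∧ (a : ZMod p) = modOrb p r₀ n * 4^(2^n) := by
  induction n with
  | zero => exact ⟨-5, by norm_num [critOrb], by simp [modOrb, h0]⟩
  | succ n ih =>
    obtain ⟨a, h1, h2⟩ := ih
    refine ⟨a^2 - a * 4^(2^n) - (4^(2^n))^2, ?_, ?_⟩
    · have e : (4:ℚ)^(2^(n+1)) = (4^(2^n))^2 := by rw [← pow_mul, pow_succ]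
      rw [e, critOrb, h1]
      have : (4:ℚ)^(2^n) ≠ 0 := by positivity
      push_cast
      generalize (4:ℚ)^(2^n) = D at *
      field_simp
      ring
    · have e : (4:ZMod p)^(2^(n+1)) = (4^(2^n))^2 := by rw [← pow_mul, pow_succ]
      rw [e]
      push_cast
      rw [h2, modOrb]
      ring

theorem nonsq_mod (p : ℕ) [Fact p.Prime] (r₀ : ZMod p) (h0 : r₀ * 4 = -5) (h4 : (4 : ZMod p) ≠ 0)
    (n : ℕ) (α β γ δ : ℤ)
    (hs : IsSquare ((critOrb (-1) n)^4 + α * (critOrb (-1) n)^3 + β * (critOrb (-1) n)^2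
      + γ * (critOrb (-1) n) + δ)) :
    IsSquare ((modOrb p r₀ n)^4 + α * (modOrb p r₀ n)^3 + β * (modOrb p r₀ n)^2
      + γ * (modOrb p r₀ n) + δ) := by
  obtain ⟨a, h1, h2⟩ := critOrb_mod p r₀ h0 n
  obtain ⟨q, hq⟩ := hs
  rw [h1] at hq
  have hsq : IsSquare (a^4 + α * a^3 * 4^(2^n) + β * a^2 * (4^(2^n))^2 + γ * a * (4^(2^n))^3
      + δ * (4^(2^n))^4) := by
    refine isSquare_int_of (q * (4^(2^n))^2) _ ?_
    have : (4:ℚ)^(2^n) ≠ 0 := by positivity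
    push_cast
    generalize (4:ℚ)^(2^n) = D at *
    have e : q * D^2 * (q * D^2) = (q * q) * D^4 := by ring
    rw [e, ← hq]
    field_simp
  obtain ⟨Y, hY⟩ := hsq
  have hY' := congrArg (Int.cast : ℤ → ZMod p) hY
  push_cast at hY'
  rw [h2] at hY'
  have hD : (4:ZMod p)^(2^n) ≠ 0 := pow_ne_zero _ h4
  generalize (4:ZMod p)^(2^n) = D at *
  generalize modOrb p r₀ n = r at *
  refine ⟨Y / D^2, ?_⟩
  field_simp
  linear_combination hY'

theorem modOrb_three (j : ℕ) : modOrb 3 1 (2*j) = 1 ∧ modOrb 3 1 (2*j+1) = 2 := by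
  induction j with
  | zero => simp only [modOrb]; decide
  | succ j ih =>
    have : modOrb 3 1 (2*(j+1)) = 1 := by
      rw [show 2*(j+1) = (2*j+1)+1 by ring, modOrb, ih.2]; decide
    refine ⟨this, ?_⟩
    rw [modOrb, this]; decide

theorem modOrb_23 (j : ℕ) : modOrb 23 16 (2*j+4) = -1 := by
  induction j with
  | zero => simp only [modOrb]; decide
  | succ j ih =>
    rw [show 2*(j+1)+4 = (2*j+4)+1+1 by ring, modOrb, modOrb, ih]; decide

instance fact_prime_23 : Fact (Nat.Prime 23) := ⟨by norm_num⟩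

theorem nonsq_g2 (n : ℕ) :
    ¬ IsSquare ((X ^ 4 - X ^ 3 - 3 * X ^ 2 + X + 1 : ℚ[X]).eval (critOrb (-1) n)) := by
  intro h
  have h' := nonsq_mod 3 1 (by decide) (by decide) n (-1) (-3) 1 1 (by
    convert h using 1; simp; ring)
  rcases Nat.even_or_odd' n with ⟨j, rfl | rfl⟩
  · rw [(modOrb_three j).1] at h'; revert h'; decide
  · rw [(modOrb_three j).2] at h'; revert h'; decide

theorem nonsq_g1 (n : ℕ) :
    ¬ IsSquare ((X ^ 4 - 3 * X ^ 3 + 4 * X - 1 : ℚ[X]).eval (critOrb (-1) n)) := by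
  intro h
  have hh : IsSquare ((critOrb (-1) n)^4 + (-3:ℤ) * (critOrb (-1) n)^3 + (0:ℤ) * (critOrb (-1) n)^2
      + (4:ℤ) * (critOrb (-1) n) + (-1:ℤ)) := by
    convert h using 1; simp; ring
  rcases Nat.even_or_odd' n with ⟨j, rfl | rfl⟩
  · match j with
    | 0 => revert hh; norm_num [critOrb]
    | 1 => revert hh; norm_num [critOrb]
    | j + 2 =>
      have h' := nonsq_mod 23 16 (by decide) (by decide) _ _ _ _ _ hh
      rw [show 2 * (j+2) = 2*j+4 by ring, modOrb_23] at h'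
      revert h'; decide
  · have h' := nonsq_mod 3 1 (by decide) (by decide) _ _ _ _ _ hh
    rw [(modOrb_three j).2] at h'; revert h'; decide

theorem polyIter_succ' (f : Polynomial ℤ) (n : ℕ) :
    polyIter f (n+1) = (polyIter f n).comp f := by
  induction n with
  | zero => simp [polyIter]
  | succ n ih =>
    change f.comp (polyIter f (n+1)) = (f.comp (polyIter f n)).comp f
    rw [ih, comp_assoc]

theorem map_quad (k : ℤ) : ((X ^ 2 + C k * X - 1 : ℤ[X]).map (Int.castRingHom ℚ))
    = X^2 + C (k:ℚ) * X - 1 := by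
  simp [Polynomial.map_sub]

theorem eval_polyIter (k : ℤ) (n : ℕ) :
    ((polyIter (X ^ 2 + C k * X - 1) n).map (Int.castRingHom ℚ)).eval (-((k:ℚ)^2+4)/4)
      = critOrb k n := by
  induction n with
  | zero => simp [polyIter, critOrb]
  | succ n ih =>
    rw [polyIter, map_comp, map_quad, eval_comp, ih, critOrb]
    simp only [eval_sub, eval_add, eval_mul, eval_pow, eval_X, eval_C, eval_one]

theorem quad_natDegree (k : ℚ) : (X^2 + C k * X - 1 : ℚ[X]).natDegree = 2 := by
  compute_degree!

theorem quad_monic (k : ℚ) : (X^2 + C k * X - 1 : ℚ[X]).Monic := by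
  monicity!

theorem stable_of (k : ℤ) (g : ℚ[X]) (hg : g.Monic) (hi : Irreducible g) (he : Even g.natDegree)
    (hs : ∀ n, ¬ IsSquare (g.eval (critOrb k n))) (n : ℕ) :
    Irreducible (g.comp ((polyIter (X ^ 2 + C k * X - 1) n).map (Int.castRingHom ℚ))) := by
  have key : (g.comp ((polyIter (X ^ 2 + C k * X - 1) n).map (Int.castRingHom ℚ))).Monic ∧
      Even (g.comp ((polyIter (X ^ 2 + C k * X - 1) n).map (Int.castRingHom ℚ))).natDegree ∧
      Irreducible (g.comp ((polyIter (X ^ 2 + C k * X - 1) n).map (Int.castRingHom ℚ))) := by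
    induction n with
    | zero => simpa [polyIter] using ⟨hg, he, hi⟩
    | succ n ih =>
      obtain ⟨h1, h2, h3⟩ := ih
      rw [polyIter_succ', map_comp, ← comp_assoc, map_quad]
      refine ⟨h1.comp (quad_monic _) (by rw [quad_natDegree]; norm_num), ?_, ?_⟩
      · rw [natDegree_comp]; exact h2.mul_right _
      · apply capelli_step _ _ h1 h3 h2
        rw [eval_comp, eval_polyIter]
        exact hs n
  exact key.2.2

theorem quad_irred (k : ℤ) (hk : k ≠ 0) : Irreducible (X^2 + C (k:ℚ) * X - 1 : ℚ[X]) := by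
  rw [(quad_monic _).irreducible_iff_roots_eq_zero_of_degree_le_three (by rw [quad_natDegree])
    (by rw [quad_natDegree]; norm_num)]
  rw [Multiset.eq_zero_iff_forall_notMem]
  intro y hy
  have hy' := (mem_roots'.1 hy).2
  simp only [IsRoot, eval_add, eval_sub, eval_pow, eval_X, eval_mul, eval_C, eval_one] at hy'
  have h : IsSquare (k^2+4) := by
    refine isSquare_int_of (2 * y + k) _ ?_
    push_cast
    linear_combination 4 * hy'
  have h' : IsSquare (|k|^2+4) := by rwa [sq_abs]
  have hk1 : 1 ≤ |k| := Int.one_le_abs hk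
  revert h'
  generalize |k| = l at *
  by_cases h2 : 2 ≤ l
  · apply not_sq_between l <;> nlinarith
  · obtain rfl : l = 1 := by omega
    norm_num

theorem quad_eval (k : ℤ) (n : ℕ) :
    (X^2 + C (k:ℚ) * X - 1 : ℚ[X]).eval (critOrb k n) = critOrb k (n+1) := by
  simp [critOrb]

theorem stability_X_sq_add_kX_sub_one (k : ℤ) (hk0 : k ≠ 0) :
    (k ≠ -1 →
      ∀ n : ℕ, 1 ≤ n →
        Irreducible ((polyIter (X ^ 2 + C k * X - 1) n).map (Int.castRingHom ℚ))) ∧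
    (k = -1 →
      polyIter (X ^ 2 + C k * X - 1) 3 =
        (X ^ 4 - 3 * X ^ 3 + 4 * X - 1) * (X ^ 4 - X ^ 3 - 3 * X ^ 2 + X + 1) ∧
      (∀ n : ℕ, Irreducible
        (((X ^ 4 - 3 * X ^ 3 + 4 * X - 1 : Polynomial ℤ).comp
          (polyIter (X ^ 2 + C k * X - 1) n)).map (Int.castRingHom ℚ))) ∧
      (∀ n : ℕ, Irreducible
        (((X ^ 4 - X ^ 3 - 3 * X ^ 2 + X + 1 : Polynomial ℤ).comp
          (polyIter (X ^ 2 + C k * X - 1) n)).map (Int.castRingHom ℚ)))) := by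
  constructor
  · intro hk1 n hn
    obtain ⟨n, rfl⟩ : ∃ j, n = j + 1 := ⟨n - 1, by omega⟩
    by_cases hk4 : k = 4
    · subst hk4
      match n with
      | 0 =>
        rw [polyIter, polyIter, comp_X, map_quad]
        exact quad_irred 4 (by norm_num)
      | n + 1 =>
        rw [polyIter, polyIter, map_comp, map_comp, map_quad, ← comp_assoc]
        refine stable_of 4 _ ((quad_monic _).comp (quad_monic _) (by rw [quad_natDegree]; norm_num))
          ?_ (by rw [natDegree_comp, quad_natDegree]; decide) ?_ n
        · exact_mod_cast irred_four
        · intro j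
          rw [eval_comp, quad_eval, quad_eval]
          exact nonsq_four j
    · rw [polyIter, map_comp, map_quad]
      refine stable_of k _ (quad_monic _) (quad_irred k hk0) (by rw [quad_natDegree]; decide) ?_ n
      intro j
      rw [quad_eval]
      by_cases hA : k ≤ -3 ∨ 6 ≤ k
      · exact nonsq_generic k hA j
      · by_cases hB : k = 1 ∨ k = 2 ∨ k = 3
        · exact nonsq_neg k hB (j+1)
        · obtain rfl | rfl : k = -2 ∨ k = 5 := by omega
          · exact nonsq_neg_two j
          · exact nonsq_five j
  · rintro rfl
    refine ⟨?_, ?_, ?_⟩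
    · simp only [polyIter, sub_comp, add_comp, mul_comp, pow_comp, X_comp, C_comp, one_comp,
        C_neg, C_1, neg_comp]
      ring
    · intro n
      rw [map_comp]
      have e : ((X ^ 4 - 3 * X ^ 3 + 4 * X - 1 : ℤ[X]).map (Int.castRingHom ℚ))
          = X ^ 4 - 3 * X ^ 3 + 4 * X - 1 := by simp [Polynomial.map_sub]
      rw [e]
      have hd : (X ^ 4 - 3 * X ^ 3 + 4 * X - 1 : ℚ[X]).natDegree = 4 := by compute_degree!
      exact stable_of (-1) _ (by monicity!) irred_g1 (by rw [hd]; decide) nonsq_g1 n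
    · intro n
      rw [map_comp]
      have e : ((X ^ 4 - X ^ 3 - 3 * X ^ 2 + X + 1 : ℤ[X]).map (Int.castRingHom ℚ))
          = X ^ 4 - X ^ 3 - 3 * X ^ 2 + X + 1 := by simp [Polynomial.map_sub]
      rw [e]
      have hd : (X ^ 4 - X ^ 3 - 3 * X ^ 2 + X + 1 : ℚ[X]).natDegree = 4 := by compute_degree!
      exact stable_of (-1) _ (by monicity!) irred_g2 (by rw [hd]; decide) nonsq_g2 n
end

section
/- Let f ∈ ℤ[x] be such that every iterate f^n (n ≥ 1) is separable over ℚ, 0 is a critical point of f (i.e. f′(0) = 0), the set {f^n(0) : n ≥ 1} is infinite, and (f^n(0))_{n≥1} is a rigid divisibility sequence (for every prime p, v_p(f^n(0)) > 0 implies v_p(f^{mn}(0)) = v_p(f^n(0)) for all m ≥ 1). If g ∈ ℤ[x] divides f in ℤ[x], then the sequence b_n = g(f^{n−1}(0)) (n ≥ 1) consists of nonzero integers and is a rigid divisibility sequence: for every prime p and all n ≥ 1, if v_p(b_n) > 0 then v_p(b_{mn}) = v_p(b_n) for all m ≥ 1. -/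
open Polynomial

theorem iter_sub_dvd_aux (f : Polynomial ℤ) (n : ℕ) (x y : ℤ) :
    x - y ∣ (fun z => Polynomial.eval z f)^[n] x - (fun z => Polynomial.eval z f)^[n] y := by
  induction n with
  | zero => simp
  | succ k ih =>
    rw [Function.iterate_succ_apply', Function.iterate_succ_apply']
    exact ih.trans (Polynomial.sub_dvd_eval_sub _ _ f)

theorem iter_ne_zero_aux (F : ℤ → ℤ)
    (hinf : {x : ℤ | ∃ n : ℕ, 1 ≤ n ∧ F^[n] 0 = x}.Infinite) (n : ℕ) (hn : 1 ≤ n) :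
    F^[n] 0 ≠ 0 := by
  intro h0
  apply hinf
  apply ((Finset.range n).image (fun i => F^[i] 0)).finite_toSet.subset
  rintro x ⟨m, -, rfl⟩
  have hp : Function.IsPeriodicPt F n 0 := h0
  simp only [Finset.coe_image, Set.mem_image, Finset.coe_range, Set.mem_Iio]
  exact ⟨m % n, Nat.mod_lt _ hn, hp.iterate_mod_apply m⟩

theorem val_ge_aux (p : ℕ) [Fact p.Prime] (k : ℕ) (q : Polynomial ℤ) (x y : ℤ)
    (hxy : (p : ℤ) ^ k ∣ x - y) (hx : q.eval x ≠ 0)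
    (hk : padicValInt p (q.eval y) ≤ k) :
    padicValInt p (q.eval y) ≤ padicValInt p (q.eval x) := by
  have h1 : (p : ℤ) ^ padicValInt p (q.eval y) ∣ q.eval x - q.eval y :=
    ((pow_dvd_pow _ hk).trans hxy).trans (Polynomial.sub_dvd_eval_sub _ _ q)
  have h2 : (p : ℤ) ^ padicValInt p (q.eval y) ∣ q.eval x := by
    have := dvd_add h1 (padicValInt_dvd (p := p) (q.eval y))
    simpa using this
  rcases (padicValInt_dvd_iff _ _).1 h2 with h | h
  · exact absurd h hx
  · exact h

theorem rigid_divisibility_of_factor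
    (f : Polynomial ℤ)
    (hsep : ∀ n : ℕ, 1 ≤ n → ((polyIter f n).map (Int.castRingHom ℚ)).Separable)
    (hcrit : Polynomial.eval 0 (Polynomial.derivative f) = 0)
    (hinf : {x : ℤ | ∃ n : ℕ, 1 ≤ n ∧ (fun y => Polynomial.eval y f)^[n] 0 = x}.Infinite)
    (hrigid : ∀ p : ℕ, p.Prime → ∀ n : ℕ, 1 ≤ n → ∀ m : ℕ, 1 ≤ m →
      0 < padicValInt p ((fun y => Polynomial.eval y f)^[n] 0) →
      padicValInt p ((fun y => Polynomial.eval y f)^[m * n] 0) =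
        padicValInt p ((fun y => Polynomial.eval y f)^[n] 0))
    (g : Polynomial ℤ) (hdvd : g ∣ f)
    (b : ℕ → ℤ)
    (hb : ∀ n : ℕ, 1 ≤ n → b n = Polynomial.eval ((fun y => Polynomial.eval y f)^[n - 1] 0) g) :
    (∀ n : ℕ, 1 ≤ n → b n ≠ 0) ∧
    (∀ p : ℕ, p.Prime → ∀ n : ℕ, 1 ≤ n → ∀ m : ℕ, 1 ≤ m →
      0 < padicValInt p (b n) → padicValInt p (b (m * n)) = padicValInt p (b n)) := by
  obtain ⟨h, rfl⟩ := hdvd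
  set F : ℤ → ℤ := fun y => Polynomial.eval y (g * h) with hF
  have ha : ∀ n, 1 ≤ n → F^[n] 0 ≠ 0 := fun n hn => iter_ne_zero_aux F hinf n hn
  have hfac : ∀ n, 1 ≤ n → F^[n] 0 = g.eval (F^[n - 1] 0) * h.eval (F^[n - 1] 0) := by
    intro n hn
    obtain ⟨k, rfl⟩ := Nat.exists_eq_add_of_le' hn
    rw [Function.iterate_succ_apply', Nat.add_sub_cancel]
    simp [hF]
  have hg : ∀ n, 1 ≤ n → g.eval (F^[n - 1] 0) ≠ 0 := fun n hn =>
    left_ne_zero_of_mul (hfac n hn ▸ ha n hn)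
  have hh : ∀ n, 1 ≤ n → h.eval (F^[n - 1] 0) ≠ 0 := fun n hn =>
    right_ne_zero_of_mul (hfac n hn ▸ ha n hn)
  refine ⟨fun n hn => hb n hn ▸ hg n hn, ?_⟩
  intro p hp n hn m hm hpos
  haveI : Fact p.Prime := ⟨hp⟩
  have hmn : 1 ≤ m * n := Nat.mul_pos hm hn
  rw [hb n hn] at hpos ⊢
  rw [hb _ hmn]
  have hv : ∀ n, 1 ≤ n → padicValInt p (F^[n] 0) =
      padicValInt p (g.eval (F^[n - 1] 0)) + padicValInt p (h.eval (F^[n - 1] 0)) := by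
    intro n hn
    rw [hfac n hn, padicValInt.mul (hg n hn) (hh n hn)]
  have hvn := hv n hn
  have hvmn := hv _ hmn
  have hkpos : 0 < padicValInt p (F^[n] 0) := by omega
  have hr := hrigid p hp n hn m hm hkpos
  have hd0 : (p : ℤ) ^ padicValInt p (F^[n] 0) ∣ F^[(m - 1) * n] 0 := by
    rcases Nat.eq_or_lt_of_le hm with h1 | h1
    · subst h1; simp
    · rw [← hrigid p hp n hn (m - 1) (by omega) hkpos]
      exact padicValInt_dvd _
  have hd : (p : ℤ) ^ padicValInt p (F^[n] 0) ∣ F^[m * n - 1] 0 - F^[n - 1] 0 := by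
    have he : m * n - 1 = (n - 1) + (m - 1) * n := by
      obtain ⟨k, rfl⟩ := Nat.exists_eq_add_of_le' hm
      rw [Nat.add_sub_cancel, add_mul]
      omega
    rw [he, Function.iterate_add_apply]
    refine dvd_trans ?_ (iter_sub_dvd_aux (g * h) (n - 1) _ 0)
    simpa using hd0
  have hG := val_ge_aux p _ g _ _ hd (hg _ hmn) (by omega)
  have hH := val_ge_aux p _ h _ _ hd (hh _ hmn) (by omega)
  omega
end
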